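/- Suppose m≥N, k≥1, i_1=1, S_1(C)=dom(C), and i_{k+1} is a vertex of G with i_{k+1}>i_k that is a predecessor in G of some vertex i_ℓ∈dom(C) that is not bypassed in C. For each t∈{1,…,m} let D_t be the clause C∨¬p_{i_{k+1},t}. Then there exists t∈{1,…,m} such that S_1(D_t)={i_1,…,i_k,i_{k+1}}. -/

import Mathlib

open scoped Classical

/-! ### Clauses and literals -/

abbrev Lit (V : Type) := V × Bool
abbrev Clause (V : Type) := Finset (V × Bool)

/-- Propositional variables for the Stone principle: `p i j` and `r j`. -/
inductive SV where
  | p (i j : ℕ) : SV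
  | r (j : ℕ) : SV
deriving DecidableEq

/-- A dag on vertices `1,…,N` with unique sink `1`, in which every non-source vertex
(the vertices `1,…,n`) has exactly the two predecessors `p1 i` and `p2 i`,
every edge `(i′,i)` satisfies `i′ > i`, and the sources are exactly `n+1,…,N`. -/
structure StoneDag where
  N : ℕ
  n : ℕ
  p1 : ℕ → ℕ
  p2 : ℕ → ℕ
  n_lt_N : n < N
  p1_gt : ∀ i, 1 ≤ i → i ≤ n → i < p1 i
  p2_gt : ∀ i, 1 ≤ i → i ≤ n → i < p2 i
  p1_le : ∀ i, 1 ≤ i → i ≤ n → p1 i ≤ N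
  p2_le : ∀ i, 1 ≤ i → i ≤ n → p2 i ≤ N
  p_ne : ∀ i, 1 ≤ i → i ≤ n → p1 i ≠ p2 i
  unique_sink : ∀ i, 2 ≤ i → i ≤ N → ∃ v, 1 ≤ v ∧ v ≤ n ∧ (p1 v = i ∨ p2 v = i)

/-- The clause set `Stone(G,m)`. -/
def stoneClauses (G : StoneDag) (m : ℕ) : Set (Clause SV) :=
  { C | ∃ i, 1 ≤ i ∧ i ≤ G.N ∧
      C = (Finset.Icc 1 m).image (fun j => ((SV.p i j, true) : Lit SV)) } ∪
  { C | ∃ i j, G.n < i ∧ i ≤ G.N ∧ 1 ≤ j ∧ j ≤ m ∧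
      C = {(SV.p i j, false), (SV.r j, true)} } ∪
  { C | ∃ j, 1 ≤ j ∧ j ≤ m ∧ C = {(SV.p 1 j, false), (SV.r j, false)} } ∪
  { C | ∃ i j j' j'', 1 ≤ i ∧ i ≤ G.n ∧ 1 ≤ j ∧ j ≤ m ∧ 1 ≤ j' ∧ j' ≤ m ∧
      1 ≤ j'' ∧ j'' ≤ m ∧ j ≠ j' ∧ j ≠ j'' ∧
      C = {(SV.p (G.p1 i) j', false), (SV.r j', false),
           (SV.p (G.p2 i) j'', false), (SV.r j'', false),
           (SV.p i j, false), (SV.r j, true)} }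

/-! ### Resolution inference rules -/

/-- `(A ∖ {x}) ∪ (B ∖ {¬x})`. -/
def wres {V : Type} [DecidableEq V] (x : V) (A B : Clause V) : Clause V :=
  A.erase (x, true) ∪ B.erase (x, false)

/-- w-resolution inference. -/
def wstep {V : Type} [DecidableEq V] (x : V) (A B C : Clause V) : Prop :=
  C = wres x A B

/-- ordinary resolution inference. -/
def rstep {V : Type} [DecidableEq V] (x : V) (A B C : Clause V) : Prop :=
  (x, true) ∈ A ∧ (x, false) ∈ B ∧ C = wres x A B

/-- degenerate resolution inference. -/
def dstep {V : Type} [DecidableEq V] (x : V) (A B C : Clause V) : Prop :=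
  ((x, true) ∈ A ∧ (x, false) ∈ B ∧ C = wres x A B) ∨
  ((x, true) ∈ A ∧ (x, false) ∉ B ∧ C = B) ∨
  ((x, true) ∉ A ∧ (x, false) ∈ B ∧ C = A) ∨
  ((x, true) ∉ A ∧ (x, false) ∉ B ∧ (C = A ∨ C = B))

/-! ### Tree-like proofs -/

/-- Binary proof trees: each node is labeled with a clause, internal nodes also
with a resolution variable. -/
inductive PTree (V : Type) [DecidableEq V] where
  | leaf : Clause V → PTree V
  | node : Clause V → V → PTree V → PTree V → PTree V

namespace PTree

variable {V : Type} [DecidableEq V]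

/-- The clause labeling the root. -/
def clause : PTree V → Clause V
  | leaf c => c
  | node c _ _ _ => c

/-- Number of nodes. -/
def size : PTree V → ℕ
  | leaf _ => 1
  | node _ _ t1 t2 => t1.size + t2.size + 1

/-- The set of variables used as resolution variables. -/
def resVars : PTree V → Finset V
  | leaf _ => ∅
  | node _ x t1 t2 => insert x (t1.resVars ∪ t2.resVars)

/-- No variable is used as a resolution variable more than once on any
root-to-leaf path. -/
def regular : PTree V → Prop
  | leaf _ => True
  | node _ x t1 t2 => x ∉ t1.resVars ∧ x ∉ t2.resVars ∧ t1.regular ∧ t2.regular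

/-- Every internal node is obtained from its children by the inference `step`. -/
def wf (step : V → Clause V → Clause V → Clause V → Prop) : PTree V → Prop
  | leaf _ => True
  | node c x t1 t2 => step x t1.clause t2.clause c ∧ t1.wf step ∧ t2.wf step

/-- All clauses occurring in the tree. -/
def clauses : PTree V → Set (Clause V)
  | leaf c => {c}
  | node c _ t1 t2 => t1.clauses ∪ t2.clauses ∪ {c}

/-- Every leaf is labeled by a clause of `Γ` or by a clause occurring strictly
earlier in postorder; `S` is the set of clauses occurring before this subtree. -/
def lemmasOK (Γ : Set (Clause V)) : PTree V → Set (Clause V) → Prop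
  | leaf c, S => c ∈ Γ ∨ c ∈ S
  | node _ _ t1 t2, S => t1.lemmasOK Γ S ∧ t2.lemmasOK Γ (S ∪ t1.clauses)

/-- Every leaf is labeled by a clause of `Γ`. -/
def leavesIn (Γ : Set (Clause V)) : PTree V → Prop
  | leaf c => c ∈ Γ
  | node _ _ t1 t2 => t1.leavesIn Γ ∧ t2.leavesIn Γ

/-- Postorder scan computing, from the set `L` of clauses learned so far
(initially `Γ`), the pair of (i) the set of clauses learned after traversing the
subtree — a clause becomes learned when it is the final clause of an input
subderivation, i.e. a subderivation each of whose inferences has at least one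
hypothesis that is already learned — and (ii) whether this subtree is an input
subderivation. -/
def scan : PTree V → Set (Clause V) → Set (Clause V) × Prop
  | leaf _, L => (L, True)
  | node c _ t1 t2, L =>
      let r1 := t1.scan L
      let r2 := t2.scan r1.1
      let inp : Prop := r1.2 ∧ r2.2 ∧ (t1.clause ∈ r1.1 ∨ t2.clause ∈ r2.1)
      ({ d | d ∈ r2.1 ∨ (inp ∧ d = c) }, inp)

/-- Every leaf is labeled by a learned clause (a clause of the initial set `L`,
or one derived by an input subderivation strictly earlier in postorder). -/
def lemOK : PTree V → Set (Clause V) → Prop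
  | leaf c, L => c ∈ L
  | node _ _ t1 t2, L => t1.lemOK L ∧ t2.lemOK (t1.scan L).1

end PTree

/-- regWRTL refutation of `Γ`. -/
def RegWRTLRefutation {V : Type} [DecidableEq V] (Γ : Set (Clause V)) (T : PTree V) : Prop :=
  T.clause = ∅ ∧ T.wf wstep ∧ T.regular ∧ T.lemmasOK Γ ∅

/-- pool resolution refutation of `Γ`. -/
def PoolRefutation {V : Type} [DecidableEq V] (Γ : Set (Clause V)) (T : PTree V) : Prop :=
  T.clause = ∅ ∧ T.wf dstep ∧ T.regular ∧ T.lemmasOK Γ ∅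

/-- regRTL refutation of `Γ`. -/
def RegRTLRefutation {V : Type} [DecidableEq V] (Γ : Set (Clause V)) (T : PTree V) : Prop :=
  T.clause = ∅ ∧ T.wf rstep ∧ T.regular ∧ T.lemmasOK Γ ∅

/-- regRTI refutation of `Γ`: all lemmas are input lemmas. -/
def RegRTIRefutation {V : Type} [DecidableEq V] (Γ : Set (Clause V)) (T : PTree V) : Prop :=
  T.clause = ∅ ∧ T.wf rstep ∧ T.regular ∧ T.lemOK Γ

/-- regRTI derivation of the clause `D` from `Γ`. -/
def RegRTIDeriv {V : Type} [DecidableEq V] (Γ : Set (Clause V)) (D : Clause V)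
    (T : PTree V) : Prop :=
  T.clause = D ∧ T.wf rstep ∧ T.regular ∧ T.lemOK Γ ∧
  ∀ x ∈ T.resVars, (x, true) ∉ D ∧ (x, false) ∉ D

/-- regular tree-like resolution derivation of the clause `D` from `Γ`. -/
def RegTreeDeriv {V : Type} [DecidableEq V] (Γ : Set (Clause V)) (D : Clause V)
    (T : PTree V) : Prop :=
  T.clause = D ∧ T.wf rstep ∧ T.regular ∧ T.leavesIn Γ ∧
  ∀ x ∈ T.resVars, (x, true) ∉ D ∧ (x, false) ∉ D

/-! ### Dag-like derivations -/

/-- A dag-like resolution derivation: a sequence of `len` clauses, each an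
axiom (`just i = none`) or obtained by resolution from two earlier clauses. -/
structure DagDeriv (V : Type) [DecidableEq V] where
  len : ℕ
  cl : ℕ → Clause V
  just : ℕ → Option (ℕ × ℕ × V)

namespace DagDeriv

variable {V : Type} [DecidableEq V]

/-- Validity relative to the initial clause set `Γ`. -/
def ok (D : DagDeriv V) (Γ : Set (Clause V)) : Prop :=
  ∀ i, i < D.len →
    match D.just i with
    | none => D.cl i ∈ Γ
    | some (a, b, x) => a < i ∧ b < i ∧ rstep x (D.cl a) (D.cl b) (D.cl i)

/-- `j` is a premise of `i`. -/
def prem (D : DagDeriv V) (i j : ℕ) : Prop :=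
  ∃ a b x, D.just i = some (a, b, x) ∧ (j = a ∨ j = b)

/-- `j` lies in the subderivation of `i` (is reachable from `i` in the dag). -/
def reach (D : DagDeriv V) : ℕ → ℕ → Prop := Relation.ReflTransGen D.prem

/-- `x` is the resolution variable of the inference at `i`. -/
def resAt (D : DagDeriv V) (i : ℕ) (x : V) : Prop := ∃ a b, D.just i = some (a, b, x)

/-- No variable is used as resolution variable twice along a path of the dag. -/
def regular (D : DagDeriv V) : Prop :=
  ∀ i a b x, D.just i = some (a, b, x) →
    ∀ j, (D.reach a j ∨ D.reach b j) → ¬ D.resAt j x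

/-- The subderivation of `i` uses `x` as a resolution variable. -/
def usesVar (D : DagDeriv V) (i : ℕ) (x : V) : Prop := ∃ j, D.reach i j ∧ D.resAt j x

end DagDeriv

/-! ### Supports, bypassing, and the sets `B`, `B⁺`, `S_ℓ^B(C)` for a clause
`C = ¬p_{i_1,j_1} ∨ … ∨ ¬p_{i_k,j_k}` given by `k` and the functions
`I J : ℕ → ℕ` (with `I ℓ = i_ℓ`, `J ℓ = j_ℓ` for `1 ≤ ℓ ≤ k`). -/

/-- Index `ℓ` is bypassed. -/
def bypassed (k : ℕ) (J : ℕ → ℕ) (ℓ : ℕ) : Prop :=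
  ∃ ℓ', ℓ < ℓ' ∧ ℓ' ≤ k ∧ J ℓ' = J ℓ

/-- `ℓ'` is the max-bypasser of `ℓ`. -/
def maxByp (k : ℕ) (J : ℕ → ℕ) (ℓ ℓ' : ℕ) : Prop :=
  ℓ < ℓ' ∧ ℓ' ≤ k ∧ J ℓ' = J ℓ ∧ ∀ a, ℓ < a → a ≤ k → J a = J ℓ → a ≤ ℓ'

/-- `i_{ℓ'}` directly supports `i_ℓ`. -/
def dsup (G : StoneDag) (k : ℕ) (I J : ℕ → ℕ) (ℓ' ℓ : ℕ) : Prop :=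
  1 ≤ ℓ ∧ ℓ < ℓ' ∧ ℓ' ≤ k ∧
  (maxByp k J ℓ ℓ' ∨
    (¬ bypassed k J ℓ ∧ (I ℓ' = G.p1 (I ℓ) ∨ I ℓ' = G.p2 (I ℓ))))

/-- `i_a` supports `i_b`: reflexive transitive closure of direct support. -/
def supp (G : StoneDag) (k : ℕ) (I J : ℕ → ℕ) : ℕ → ℕ → Prop :=
  Relation.ReflTransGen (dsup G k I J)

/-- `dom(C)` as a set of vertices. -/
def domv (k : ℕ) (I : ℕ → ℕ) : Set ℕ := { v | ∃ a, 1 ≤ a ∧ a ≤ k ∧ I a = v }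

/-- `S_ℓ(C)`: the set of vertices of `dom(C)` supporting `i_ℓ`. -/
def suppSet (G : StoneDag) (k : ℕ) (I J : ℕ → ℕ) (ℓ : ℕ) : Set ℕ :=
  { v | ∃ a, 1 ≤ a ∧ a ≤ k ∧ I a = v ∧ supp G k I J a ℓ }

/-- `i_ℓ ∈ B`: not bypassed and some predecessor outside `dom(C)`. -/
def Bidx (G : StoneDag) (k : ℕ) (I J : ℕ → ℕ) (ℓ : ℕ) : Prop :=
  1 ≤ ℓ ∧ ℓ ≤ k ∧ ¬ bypassed k J ℓ ∧
  (G.p1 (I ℓ) ∉ domv k I ∨ G.p2 (I ℓ) ∉ domv k I)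

/-- `i_ℓ ∈ B₁`: exactly one predecessor outside `dom(C)`. -/
def B1idx (G : StoneDag) (k : ℕ) (I J : ℕ → ℕ) (ℓ : ℕ) : Prop :=
  Bidx G k I J ℓ ∧ (G.p1 (I ℓ) ∈ domv k I ∨ G.p2 (I ℓ) ∈ domv k I)

/-- `i_ℓ ∈ B₂`: both predecessors outside `dom(C)`. -/
def B2idx (G : StoneDag) (k : ℕ) (I J : ℕ → ℕ) (ℓ : ℕ) : Prop :=
  1 ≤ ℓ ∧ ℓ ≤ k ∧ ¬ bypassed k J ℓ ∧
  G.p1 (I ℓ) ∉ domv k I ∧ G.p2 (I ℓ) ∉ domv k I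

/-- `i_ℓ ∈ B⁺`: in `B`, or bypassed with max-bypasser in `B`. -/
def Bplus (G : StoneDag) (k : ℕ) (I J : ℕ → ℕ) (ℓ : ℕ) : Prop :=
  Bidx G k I J ℓ ∨ (1 ≤ ℓ ∧ ℓ ≤ k ∧ ∃ ℓ', maxByp k J ℓ ℓ' ∧ Bidx G k I J ℓ')

/-- Membership in `S_ℓ^B(C)` (on indices). -/
inductive SBmem (G : StoneDag) (k : ℕ) (I J : ℕ → ℕ) (ℓ : ℕ) : ℕ → Prop where
  | base : SBmem G k I J ℓ ℓ
  | byp (a b : ℕ) : SBmem G k I J ℓ a → (a = ℓ ∨ ¬ Bidx G k I J a) →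
      maxByp k J a b → ¬ Bidx G k I J b → SBmem G k I J ℓ b
  | pred (a b : ℕ) : SBmem G k I J ℓ a → (a = ℓ ∨ ¬ Bidx G k I J a) →
      ¬ bypassed k J a → 1 ≤ b → b ≤ k →
      (I b = G.p1 (I a) ∨ I b = G.p2 (I a)) → SBmem G k I J ℓ b

/-- The clause `C_ℓ`. -/
noncomputable def Clc (G : StoneDag) (k : ℕ) (I J : ℕ → ℕ) (ℓ : ℕ) : Clause SV :=
  ((Finset.Icc 1 k).filter fun a =>
      SBmem G k I J ℓ a ∧ ¬(a = ℓ ∧ bypassed k J ℓ)).image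
    fun a => ((SV.p (I a) (J a), false) : Lit SV)

/-- The clause `E_ℓ`. -/
noncomputable def Elc (G : StoneDag) (k : ℕ) (I J : ℕ → ℕ) (ℓ : ℕ) : Clause SV :=
  ((Finset.Icc 1 k).filter fun a =>
      SBmem G k I J ℓ a ∧ Bplus G k I J a ∧ (Bidx G k I J ℓ → a ≠ ℓ)).image
    fun a => ((SV.r (J a), false) : Lit SV)

/-- `t_1,…,t_r` enumerates the indices of `B ∪ {1}` in decreasing order. -/
def EnumB (G : StoneDag) (k : ℕ) (I J : ℕ → ℕ) (r : ℕ) (t : ℕ → ℕ) : Prop :=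
  (∀ q, 1 ≤ q → q ≤ r → (Bidx G k I J (t q) ∨ t q = 1)) ∧
  (∀ q q', 1 ≤ q → q < q' → q' ≤ r → t q' < t q) ∧
  (∀ ℓ, Bidx G k I J ℓ ∨ ℓ = 1 → ∃ q, 1 ≤ q ∧ q ≤ r ∧ t q = ℓ)

/-- The clause `F_q`. -/
noncomputable def Fcl (G : StoneDag) (k : ℕ) (I J : ℕ → ℕ) (r : ℕ) (t : ℕ → ℕ)
    (q : ℕ) : Clause SV :=
  if q = r ∧ ¬ Bidx G k I J 1 then Elc G k I J 1
  else (Finset.Icc 1 (q - 1)).image fun q' => ((SV.r (J (t q')), false) : Lit SV)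

/-- The standing hypotheses on the clause `C`: `k ≥ 1`, `1 = i_1 < … < i_k ≤ n`,
`j_ℓ ∈ {1,…,m}`, and every vertex of `dom(C)` supports vertex `1`. -/
def GoodC (G : StoneDag) (m k : ℕ) (I J : ℕ → ℕ) : Prop :=
  1 ≤ k ∧ I 1 = 1 ∧ I k ≤ G.n ∧
  (∀ a b, 1 ≤ a → a < b → b ≤ k → I a < I b) ∧
  (∀ a, 1 ≤ a → a ≤ k → 1 ≤ J a ∧ J a ≤ m) ∧
  (∀ a, 1 ≤ a → a ≤ k → supp G k I J a 1)

/-!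
If `t` is none of `j_1, …, j_k`, then the new literal bypasses nothing, so `C` and `D_t` have the
same support relation on `i_1, …, i_k`; moreover `i_{k+1}` directly supports the non-bypassed
`i_ℓ` it precedes, hence everything that `i_ℓ` supports. Such a `t ≤ m` exists as soon as `k < m`,
and `k < N` because `i_1 < … < i_k < i_{k+1} ≤ N`.
-/

/-- `v` is a predecessor of `w` in `G`, i.e. `(v, w)` is an edge. The bounds on `w` restrict `p1`
and `p2` to the non-sources, the only vertices at which their values are meaningful. -/
def StoneDag.IsPred (G : StoneDag) (v w : ℕ) : Prop :=
  1 ≤ w ∧ w ≤ G.n ∧ (v = G.p1 w ∨ v = G.p2 w)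

theorem exists_mem_notMem_image_of_card_lt_card {α β : Type*} [DecidableEq β] {s : Finset α}
    {u : Finset β} (f : α → β) (h : s.card < u.card) : ∃ b ∈ u, b ∉ s.image f :=
  Finset.exists_mem_notMem_of_card_lt_card (Finset.card_image_le.trans_lt h)

theorem le_apply_of_strictMonoOn_Icc {α : Type*} [LinearOrder α] [SuccOrder α]
    [IsSuccArchimedean α] {f : α → α} {a b : α} (hab : a ≤ b) (hf : StrictMonoOn f (Set.Icc a b))
    (ha : a ≤ f a) : b ≤ f b := by
  induction hab using Succ.rec with
  | rfl => exact ha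
  | succ n han ih =>
    have hle : n ≤ Order.succ n := Order.le_succ n
    have hn : n ≤ f n := ih (hf.mono (Set.Icc_subset_Icc_right hle))
    rcases hle.eq_or_lt with heq | hlt
    · rwa [← heq]
    · exact Order.succ_le_of_lt (hn.trans_lt (hf ⟨han, hle⟩ ⟨han.trans hle, le_rfl⟩ hlt))

theorem domv_succ (k : ℕ) (I : ℕ → ℕ) : domv (k + 1) I = insert (I (k + 1)) (domv k I) := by
  ext v
  constructor
  · rintro ⟨a, ha, hak, rfl⟩
    rcases Nat.le_succ_iff.mp hak with hak | rfl
    · exact Or.inr ⟨a, ha, hak, rfl⟩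
    · exact Or.inl rfl
  · rintro (rfl | ⟨a, ha, hak, rfl⟩)
    · exact ⟨k + 1, by omega, le_rfl, rfl⟩
    · exact ⟨a, ha, by omega, rfl⟩

theorem suppSet_eq_domv {G : StoneDag} {k s : ℕ} {I J : ℕ → ℕ}
    (h : ∀ a, 1 ≤ a → a ≤ k → supp G k I J a s) : suppSet G k I J s = domv k I := by
  ext v
  constructor
  · rintro ⟨a, ha, hak, rfl, -⟩
    exact ⟨a, ha, hak, rfl⟩
  · rintro ⟨a, ha, hak, rfl⟩
    exact ⟨a, ha, hak, rfl, h a ha hak⟩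

section FreshStone

variable {G : StoneDag} {k a b ℓ s t : ℕ} {I J : ℕ → ℕ}

theorem le_and_update_succ_eq_iff (ht : t ∉ (Finset.Icc 1 k).image J) (hℓ : 1 ≤ ℓ) (hℓk : ℓ ≤ k) :
    b ≤ k + 1 ∧ Function.update J (k + 1) t b = Function.update J (k + 1) t ℓ ↔
      b ≤ k ∧ J b = J ℓ := by
  have hne : t ≠ J ℓ := fun h =>
    ht (h ▸ Finset.mem_image_of_mem J (Finset.mem_Icc.mpr ⟨hℓ, hℓk⟩))
  rw [Function.update_of_ne (by omega : ℓ ≠ k + 1)]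
  rcases eq_or_ne b (k + 1) with rfl | hb
  · simp [hne]
  · rw [Function.update_of_ne hb]
    exact and_congr_left' (by omega)

theorem bypassed_update_succ_iff (ht : t ∉ (Finset.Icc 1 k).image J) (hℓ : 1 ≤ ℓ) (hℓk : ℓ ≤ k) :
    bypassed (k + 1) (Function.update J (k + 1) t) ℓ ↔ bypassed k J ℓ := by
  simp only [bypassed, le_and_update_succ_eq_iff ht hℓ hℓk]

theorem maxByp_update_succ_iff (ht : t ∉ (Finset.Icc 1 k).image J) (hℓ : 1 ≤ ℓ) (hℓk : ℓ ≤ k) :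
    maxByp (k + 1) (Function.update J (k + 1) t) ℓ b ↔ maxByp k J ℓ b := by
  have key := fun c => le_and_update_succ_eq_iff (b := c) ht hℓ hℓk
  simp only [maxByp, ← and_assoc (a := _ ≤ _), ← and_imp (a := _ ≤ _), key]

theorem dsup_update_succ_iff (ht : t ∉ (Finset.Icc 1 k).image J) (ha : a ≤ k) :
    dsup G (k + 1) I (Function.update J (k + 1) t) a b ↔ dsup G k I J a b := by
  refine and_congr_right fun hb => and_congr_right fun hba => and_congr (by omega) ?_
  rw [maxByp_update_succ_iff ht hb (by omega), bypassed_update_succ_iff ht hb (by omega)]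

theorem supp_update_succ_iff (ht : t ∉ (Finset.Icc 1 k).image J) (ha : a ≤ k) :
    supp G (k + 1) I (Function.update J (k + 1) t) a b ↔ supp G k I J a b := by
  constructor
  · intro h
    induction h using Relation.ReflTransGen.head_induction_on with
    | refl => exact .refl
    | head hac _ ih => exact .head ((dsup_update_succ_iff ht ha).mp hac) (ih (hac.2.1.le.trans ha))
  · exact Relation.ReflTransGen.mono
      (fun c d (h : dsup G k I J c d) => (dsup_update_succ_iff ht h.2.2.1).mpr h) a b

theorem supp_update_succ_of_isPred (ht : t ∉ (Finset.Icc 1 k).image J) (hℓ : 1 ≤ ℓ) (hℓk : ℓ ≤ k)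
    (hbyp : ¬ bypassed k J ℓ) (hpred : G.IsPred (I (k + 1)) (I ℓ)) (hs : supp G k I J ℓ s) :
    supp G (k + 1) I (Function.update J (k + 1) t) (k + 1) s := by
  have hdsup : dsup G (k + 1) I (Function.update J (k + 1) t) (k + 1) ℓ :=
    ⟨hℓ, Nat.lt_succ_of_le hℓk, le_rfl,
      Or.inr ⟨(bypassed_update_succ_iff ht hℓ hℓk).not.mpr hbyp, hpred.2.2⟩⟩
  exact .head hdsup ((supp_update_succ_iff ht hℓk).mpr hs)

theorem suppSet_update_succ (ht : t ∉ (Finset.Icc 1 k).image J)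
    (hs : supp G (k + 1) I (Function.update J (k + 1) t) (k + 1) s) :
    suppSet G (k + 1) I (Function.update J (k + 1) t) s =
      insert (I (k + 1)) (suppSet G k I J s) := by
  ext v
  constructor
  · rintro ⟨a, ha, hak, rfl, has⟩
    rcases Nat.le_succ_iff.mp hak with hak | rfl
    · exact Or.inr ⟨a, ha, hak, rfl, (supp_update_succ_iff ht hak).mp has⟩
    · exact Or.inl rfl
  · rintro (rfl | ⟨a, ha, hak, rfl, has⟩)
    · exact ⟨k + 1, by omega, le_rfl, rfl, hs⟩
    · exact ⟨a, ha, by omega, rfl, (supp_update_succ_iff ht hak).mpr has⟩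

end FreshStone

theorem extend_claim_union_general (G : StoneDag) {m k ℓ s : ℕ} (I J : ℕ → ℕ) (hkm : k < m)
    (hℓ : 1 ≤ ℓ) (hℓk : ℓ ≤ k) (hbyp : ¬ bypassed k J ℓ)
    (hpred : G.IsPred (I (k + 1)) (I ℓ)) (hs : supp G k I J ℓ s) :
    ∃ t, 1 ≤ t ∧ t ≤ m ∧ suppSet G (k + 1) I (Function.update J (k + 1) t) s =
      insert (I (k + 1)) (suppSet G k I J s) := by
  obtain ⟨t, htm, ht⟩ := exists_mem_notMem_image_of_card_lt_card J
    (show (Finset.Icc 1 k).card < (Finset.Icc 1 m).card by simpa using hkm)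
  rw [Finset.mem_Icc] at htm
  exact ⟨t, htm.1, htm.2,
    suppSet_update_succ ht (supp_update_succ_of_isPred ht hℓ hℓk hbyp hpred hs)⟩

/-- if `m ≥ N` then for some `t ∈ {1,…,m}`,
`S_1(D_t) = {i_1,…,i_k,i_{k+1}}`. -/
theorem extend_claim_union (G : StoneDag) (m k : ℕ) (I J : ℕ → ℕ)
    (hm : G.N ≤ m) (hk : 1 ≤ k) (hI1 : I 1 = 1)
    (hmono : ∀ a b, 1 ≤ a → a < b → b ≤ k → I a < I b)
    (hIv : ∀ a, 1 ≤ a → a ≤ k → 1 ≤ I a ∧ I a ≤ G.N)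
    (hJv : ∀ a, 1 ≤ a → a ≤ k → 1 ≤ J a ∧ J a ≤ m)
    (hsup : ∀ a, 1 ≤ a → a ≤ k → supp G k I J a 1)
    (hnew_vertex : 1 ≤ I (k + 1) ∧ I (k + 1) ≤ G.N)
    (hnew_gt : I k < I (k + 1))
    (hnew_pred : ∃ ℓ, 1 ≤ ℓ ∧ ℓ ≤ k ∧ 1 ≤ I ℓ ∧ I ℓ ≤ G.n ∧
        ¬ bypassed k J ℓ ∧ (I (k + 1) = G.p1 (I ℓ) ∨ I (k + 1) = G.p2 (I ℓ))) :
    ∃ t, 1 ≤ t ∧ t ≤ m ∧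
      suppSet G (k + 1) I (Function.update J (k + 1) t) 1 = domv (k + 1) I := by
  obtain ⟨ℓ, hℓ, hℓk, hIℓ, hIℓn, hbyp, hpred⟩ := hnew_pred
  have hkm : k < m := calc
    k ≤ I k := le_apply_of_strictMonoOn_Icc hk
      (fun a ha b hb hab => hmono a b ha.1 hab hb.2) (hIv 1 le_rfl hk).1
    _ < I (k + 1) := hnew_gt
    _ ≤ G.N := hnew_vertex.2
    _ ≤ m := hm
  rw [domv_succ, ← suppSet_eq_domv hsup]
  exact extend_claim_union_general G I J hkm hℓ hℓk hbyp ⟨hIℓ, hIℓn, hpred⟩ (hsup ℓ hℓ hℓk)
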